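/- Let G be a strongly uncontrollable graph on vertex set {1,…,n} in which vertex n has degree n − 1, and let G̃ be the graph on {1,…,n+1} obtained from G by adding the new vertex n+1 adjacent only to vertex n. Then G̃ is strongly uncontrollable if and only if 1 is not an eigenvalue of L(G). -/

import Mathlib

open Classical Matrix

noncomputable def lap {n : ℕ} (G : SimpleGraph (Fin n)) : Matrix (Fin n) (Fin n) ℝ :=
  Matrix.of fun i j =>
    (if i = j then ((G.neighborSet i).ncard : ℝ) else 0) - (if G.Adj i j then 1 else 0)

def IsTwin {n : ℕ} (G : SimpleGraph (Fin n)) (u v : Fin n) : Prop :=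
  u ≠ v ∧ G.neighborSet u \ {v} = G.neighborSet v \ {u}

def IsEigenvalue {n : ℕ} (M : Matrix (Fin n) (Fin n) ℝ) (μ : ℝ) : Prop :=
  ∃ x : Fin n → ℝ, x ≠ 0 ∧ M.mulVec x = μ • x

def HasSimpleSpectrum {n : ℕ} (M : Matrix (Fin n) (Fin n) ℝ) : Prop :=
  ∃ μ : Fin n → ℝ, Function.Injective μ ∧ ∀ i, IsEigenvalue M (μ i)

def Controllable {n : ℕ} (M : Matrix (Fin n) (Fin n) ℝ) (b : Fin n → ℝ) : Prop :=
  Submodule.span ℝ (Set.range fun k : Fin n => (M ^ (k : ℕ)).mulVec b) = ⊤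

def StronglyUncontrollable {n : ℕ} (G : SimpleGraph (Fin n)) : Prop :=
  G.Connected ∧ HasSimpleSpectrum (lap G) ∧
    ∀ b : Fin n → ℝ, (∀ i, b i = 0 ∨ b i = 1) → ¬ Controllable (lap G) b

def Pmat {n k : ℕ} (c : Fin n → Fin k) : Matrix (Fin n) (Fin k) ℝ :=
  Matrix.of fun i j => if c i = j then 1 else 0

def IsAEP {n k : ℕ} (G : SimpleGraph (Fin n)) (c : Fin n → Fin k) : Prop :=
  ∀ i j : Fin k, i ≠ j → ∀ x y : Fin n, c x = i → c y = i →
    (G.neighborSet x ∩ {z | c z = j}).ncard = (G.neighborSet y ∩ {z | c z = j}).ncard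

noncomputable def quotLap {n k : ℕ} (G : SimpleGraph (Fin n)) (c : Fin n → Fin k) :
    Matrix (Fin k) (Fin k) ℝ :=
  ((Pmat c)ᵀ * Pmat c)⁻¹ * (Pmat c)ᵀ * lap G * Pmat c

def IsQuotAEP {k m : ℕ} (Lq : Matrix (Fin k) (Fin k) ℝ) (r : Fin k → Fin m) : Prop :=
  ∀ a b : Fin m, a ≠ b → ∀ C C' : Fin k, r C = a → r C' = a →
    ∑ C'' ∈ Finset.univ.filter (fun C'' => r C'' = b), Lq C C'' =
      ∑ C'' ∈ Finset.univ.filter (fun C'' => r C'' = b), Lq C' C''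

def IsGraphAut {n : ℕ} (G : SimpleGraph (Fin n)) (σ : Equiv.Perm (Fin n)) : Prop :=
  ∀ x y, G.Adj x y ↔ G.Adj (σ x) (σ y)

def joinOne {n : ℕ} (G : SimpleGraph (Fin n)) : SimpleGraph (Fin (n + 1)) where
  Adj x y := x ≠ y ∧ ((x : ℕ) = n ∨ (y : ℕ) = n ∨
    ∃ (hx : (x : ℕ) < n) (hy : (y : ℕ) < n), G.Adj ⟨x, hx⟩ ⟨y, hy⟩)
  symm := by
    refine ⟨?_⟩
    rintro x y ⟨hxy, h⟩
    refine ⟨hxy.symm, ?_⟩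
    rcases h with h | h | ⟨hx, hy, h⟩
    exacts [Or.inr (Or.inl h), Or.inl h, Or.inr (Or.inr ⟨hy, hx, h.symm⟩)]
  loopless := ⟨fun x h => h.1 rfl⟩

def joinTwo {n : ℕ} (G : SimpleGraph (Fin n)) : SimpleGraph (Fin (n + 2)) where
  Adj x y := x ≠ y ∧ (((x : ℕ) < n ∧ n ≤ (y : ℕ)) ∨ ((y : ℕ) < n ∧ n ≤ (x : ℕ)) ∨
    ∃ (hx : (x : ℕ) < n) (hy : (y : ℕ) < n), G.Adj ⟨x, hx⟩ ⟨y, hy⟩)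
  symm := by
    refine ⟨?_⟩
    rintro x y ⟨hxy, h⟩
    refine ⟨hxy.symm, ?_⟩
    rcases h with h | h | ⟨hx, hy, h⟩
    exacts [Or.inr (Or.inl h), Or.inl h, Or.inr (Or.inr ⟨hy, hx, h.symm⟩)]
  loopless := ⟨fun x h => h.1 rfl⟩

def addPendant {n : ℕ} (G : SimpleGraph (Fin n)) (v : Fin n) : SimpleGraph (Fin (n + 1)) where
  Adj x y := ((x : ℕ) = n ∧ (y : ℕ) = (v : ℕ)) ∨ ((y : ℕ) = n ∧ (x : ℕ) = (v : ℕ)) ∨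
    ∃ (hx : (x : ℕ) < n) (hy : (y : ℕ) < n), G.Adj ⟨x, hx⟩ ⟨y, hy⟩
  symm := by
    refine ⟨?_⟩
    rintro x y (h | h | ⟨hx, hy, h⟩)
    exacts [Or.inr (Or.inl h), Or.inl h, Or.inr (Or.inr ⟨hy, hx, h.symm⟩)]
  loopless := by
    refine ⟨?_⟩
    intro x h
    have hv := v.isLt
    rcases h with ⟨h1, h2⟩ | ⟨h1, h2⟩ | ⟨hx, hy, h⟩
    · omega
    · omega
    · exact G.loopless.irrefl _ h

lemma lap_mulVec {n : ℕ} (G : SimpleGraph (Fin n)) (x : Fin n → ℝ) (i : Fin n) :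
    (lap G *ᵥ x) i = ∑ j, if G.Adj i j then x i - x j else 0 := by
  have h : ((G.neighborSet i).ncard : ℝ) = ∑ j, if G.Adj i j then (1 : ℝ) else 0 := by
    rw [Finset.sum_boole, Set.ncard_eq_toFinset_card']
    congr 2
    ext j
    simp
  simp only [Matrix.mulVec, dotProduct, lap, Matrix.of_apply, sub_mul, Finset.sum_sub_distrib,
    ite_mul, zero_mul, Finset.sum_ite_eq, Finset.mem_univ, if_true, one_mul, h, Finset.sum_mul]
  rw [← Finset.sum_sub_distrib]
  refine Finset.sum_congr rfl fun j _ => ?_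
  split_ifs <;> simp

lemma lap_symm {n : ℕ} (G : SimpleGraph (Fin n)) : (lap G)ᵀ = lap G := by
  ext i j
  simp only [lap, Matrix.transpose_apply, Matrix.of_apply, G.adj_comm j i]
  by_cases h : i = j
  · subst h; rfl
  · rw [if_neg h, if_neg (Ne.symm h)]

lemma symm_dot {n : ℕ} {M : Matrix (Fin n) (Fin n) ℝ} (hM : Mᵀ = M) (x y : Fin n → ℝ) :
    x ⬝ᵥ (M *ᵥ y) = (M *ᵥ x) ⬝ᵥ y := by
  rw [Matrix.dotProduct_mulVec, ← Matrix.mulVec_transpose, hM]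

lemma eig_pow {n : ℕ} {M : Matrix (Fin n) (Fin n) ℝ} (hM : Mᵀ = M) {x : Fin n → ℝ} {μ : ℝ}
    (hx : M *ᵥ x = μ • x) (b : Fin n → ℝ) (k : ℕ) :
    x ⬝ᵥ ((M ^ k) *ᵥ b) = μ ^ k * (x ⬝ᵥ b) := by
  induction k with
  | zero => simp
  | succ k ih =>
    rw [pow_succ', ← Matrix.mulVec_mulVec, symm_dot hM, hx, smul_dotProduct, ih, smul_eq_mul]
    ring

lemma not_controllable {n : ℕ} {M : Matrix (Fin n) (Fin n) ℝ} (hM : Mᵀ = M) {x : Fin n → ℝ}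
    {μ : ℝ} (hx0 : x ≠ 0) (hx : M *ᵥ x = μ • x) {b : Fin n → ℝ} (hb : x ⬝ᵥ b = 0) :
    ¬ Controllable M b := by
  intro h
  apply hx0
  have key : ∀ y : Fin n → ℝ, x ⬝ᵥ y = 0 := by
    intro y
    have hy : y ∈ Submodule.span ℝ (Set.range fun k : Fin n => (M ^ (k : ℕ)).mulVec b) := by
      rw [Controllable] at h; rw [h]; trivial
    induction hy using Submodule.span_induction with
    | mem z hz =>
      obtain ⟨k, rfl⟩ := hz
      simp only
      rw [eig_pow hM hx, hb, mul_zero]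
    | zero => simp
    | add a c _ _ ha hc => rw [dotProduct_add, ha, hc, add_zero]
    | smul r a _ ha => rw [dotProduct_smul, ha, smul_zero]
  exact dotProduct_self_eq_zero.1 (key x)

lemma exists_orth {n : ℕ} {M : Matrix (Fin n) (Fin n) ℝ} (hM : Mᵀ = M) {μ : Fin n → ℝ}
    (hμ : Function.Injective μ) {x : Fin n → Fin n → ℝ} 
    (hx : ∀ i, M *ᵥ x i = μ i • x i) {b : Fin n → ℝ} (hb : ¬ Controllable M b) :
    ∃ i, x i ⬝ᵥ b = 0 := by
  by_contra! hne
  apply hb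
  set K : Matrix (Fin n) (Fin n) ℝ := Matrix.of fun k => (M ^ (k : ℕ)) *ᵥ b with hK
  have hprod : Matrix.of x * Kᵀ = Matrix.diagonal (fun i => x i ⬝ᵥ b) * Matrix.vandermonde μ := by
    ext i k
    rw [Matrix.diagonal_mul, Matrix.vandermonde_apply, mul_comm, ← eig_pow hM (hx i)]
    rfl
  have hdet : K.det ≠ 0 := by
    intro h0
    have := congrArg Matrix.det hprod
    rw [Matrix.det_mul, Matrix.det_transpose, h0, mul_zero, Matrix.det_mul,
      Matrix.det_diagonal] at this
    rcases mul_eq_zero.1 this.symm with h | h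
    · obtain ⟨i, _, hi⟩ := Finset.prod_eq_zero_iff.1 h
      exact hne i hi
    · exact (Matrix.det_vandermonde_ne_zero_iff.2 hμ) h
  have hli : LinearIndependent ℝ K.row :=
    Matrix.linearIndependent_rows_of_det_ne_zero hdet
  exact hli.span_eq_top_of_card_eq_finrank' (by simp)

lemma eq_zero_of_orth {n : ℕ} {M : Matrix (Fin n) (Fin n) ℝ} {μ : Fin n → ℝ}
    (hμ : Function.Injective μ) {x : Fin n → Fin n → ℝ} (hx0 : ∀ i, x i ≠ 0)
    (hx : ∀ i, M *ᵥ x i = μ i • x i) {w : Fin n → ℝ} (hw : ∀ i, x i ⬝ᵥ w = 0) : w = 0 := by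
  have hli : LinearIndependent ℝ x :=
    Module.End.eigenvectors_linearIndependent' (Matrix.toLin' M) μ hμ x
      (fun i => Module.End.hasEigenvector_iff.2 ⟨Module.End.mem_eigenspace_iff.2 (by
        rw [Matrix.toLin'_apply]; exact hx i), hx0 i⟩)
  have htop := hli.span_eq_top_of_card_eq_finrank' (by simp)
  have key : ∀ y : Fin n → ℝ, y ⬝ᵥ w = 0 := by
    intro y
    have hy : y ∈ Submodule.span ℝ (Set.range x) := by rw [htop]; trivial
    induction hy using Submodule.span_induction with
    | mem z hz => obtain ⟨k, rfl⟩ := hz; exact hw k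
    | zero => simp
    | add a c _ _ ha hc => rw [add_dotProduct, ha, hc, add_zero]
    | smul r a _ ha => rw [smul_dotProduct, ha, smul_zero]
  exact dotProduct_self_eq_zero.1 (key w)

lemma eig_orth {n : ℕ} {M : Matrix (Fin n) (Fin n) ℝ} (hM : Mᵀ = M) {x y : Fin n → ℝ}
    {a c : ℝ} (hx : M *ᵥ x = a • x) (hy : M *ᵥ y = c • y) (hac : a ≠ c) : x ⬝ᵥ y = 0 := by
  have h := symm_dot hM x y
  rw [hx, hy, dotProduct_smul, smul_dotProduct, smul_eq_mul, smul_eq_mul] at h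
  have : (a - c) * (x ⬝ᵥ y) = 0 := by linarith
  exact (mul_eq_zero.1 this).resolve_left (sub_ne_zero.2 hac)

lemma eig_unique {n : ℕ} {M : Matrix (Fin n) (Fin n) ℝ} (hM : Mᵀ = M)
    (hs : HasSimpleSpectrum M) {x y : Fin n → ℝ} {a : ℝ} (hx : M *ᵥ x = a • x)
    (hx0 : x ≠ 0) (hy : M *ᵥ y = a • y) : ∃ c : ℝ, y = c • x := by
  obtain ⟨μ, hμ, he⟩ := hs
  choose z hz0 hz using he
  obtain ⟨i, hi⟩ : ∃ i, z i ⬝ᵥ x ≠ 0 := by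
    by_contra! h
    exact hx0 (eq_zero_of_orth hμ hz0 hz h)
  have hia : μ i = a := by
    by_contra h
    exact hi (eig_orth hM (hz i) hx h)
  refine ⟨(z i ⬝ᵥ y) / (z i ⬝ᵥ x), ?_⟩
  rw [← sub_eq_zero]
  refine eq_zero_of_orth hμ hz0 hz fun j => ?_
  rw [dotProduct_sub, dotProduct_smul, smul_eq_mul]
  by_cases hj : j = i
  · subst hj; field_simp; ring
  · have : μ j ≠ a := fun h => hj (hμ (h.trans hia.symm))
    rw [eig_orth hM (hz j) hx this, eig_orth hM (hz j) hy this]; simp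

lemma lap_one {n : ℕ} (G : SimpleGraph (Fin n)) :
    lap G *ᵥ (fun _ => 1) = (0 : ℝ) • (fun _ => 1) := by
  ext i
  rw [lap_mulVec]; simp

lemma eig_sum {n : ℕ} (G : SimpleGraph (Fin n)) {x : Fin n → ℝ} {a : ℝ}
    (hx : lap G *ᵥ x = a • x) (ha : a ≠ 0) : ∑ i, x i = 0 := by
  have := eig_orth (lap_symm G) hx (lap_one G) ha
  simpa [dotProduct] using this

lemma lap_dom {n : ℕ} (G : SimpleGraph (Fin n)) {v : Fin n} (hv : ∀ j, j ≠ v → G.Adj v j)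
    (x : Fin n → ℝ) : (lap G *ᵥ x) v = n * x v - ∑ i, x i := by
  rw [lap_mulVec]
  have : ∀ j, (if G.Adj v j then x v - x j else 0) = x v - x j := by
    intro j
    by_cases h : j = v
    · subst h; simp
    · rw [if_pos (hv j h)]
  simp [this]

lemma eig_dom {n : ℕ} (G : SimpleGraph (Fin n)) {v : Fin n} (hv : ∀ j, j ≠ v → G.Adj v j)
    {x : Fin n → ℝ} {a : ℝ}
    (hx : lap G *ᵥ x = a • x) (ha : a ≠ 0) (han : a ≠ n) : x v = 0 := by
  have h1 := lap_dom G hv x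
  rw [hx, eig_sum G hx ha, Pi.smul_apply, smul_eq_mul] at h1
  have : (a - n) * x v = 0 := by linarith
  exact (mul_eq_zero.1 this).resolve_left (sub_ne_zero.2 han)

lemma eig_le {n : ℕ} (G : SimpleGraph (Fin n)) {x : Fin n → ℝ} {a : ℝ}
    (hx : lap G *ᵥ x = a • x) (hx0 : x ≠ 0) : a ≤ n := by
  by_cases ha : a = 0
  · subst ha; positivity
  have hs := eig_sum G hx ha
  obtain ⟨k, hk⟩ := Function.ne_iff.1 hx0
  obtain ⟨i, -, hi⟩ := Finset.exists_max_image Finset.univ x ⟨k, Finset.mem_univ _⟩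
  have hpos : 0 < x i := by
    by_contra! h
    have hall : ∀ j ∈ Finset.univ, x j ≤ 0 := fun j hj => (hi j hj).trans h
    exact hk ((Finset.sum_eq_zero_iff_of_nonpos hall).1 hs k (Finset.mem_univ _))
  have h1 := lap_mulVec G x i
  rw [hx, Pi.smul_apply, smul_eq_mul] at h1
  have h2 : (∑ j, if G.Adj i j then x i - x j else 0) ≤ ∑ j, (x i - x j) := by
    refine Finset.sum_le_sum fun j hj => ?_
    have := hi j hj
    split_ifs <;> linarith
  rw [Finset.sum_sub_distrib, hs] at h2
  simp at h2
  rw [← h1] at h2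
  exact le_of_mul_le_mul_right h2 hpos

lemma lap_dom_vec {n : ℕ} (G : SimpleGraph (Fin n)) {v : Fin n} (hv : ∀ j, j ≠ v → G.Adj v j) :
    lap G *ᵥ (fun i => 1 - (n : ℝ) * if i = v then 1 else 0)
      = (n : ℝ) • (fun i => 1 - (n : ℝ) * if i = v then 1 else 0) := by
  ext i
  by_cases hi : i = v
  · subst hi
    rw [lap_dom G hv]
    simp [Finset.sum_sub_distrib]
  · rw [lap_mulVec, Finset.sum_eq_single v]
    · simp [hi, (hv i hi).symm]
    · intro j _ hj
      simp [hi, hj]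
    · simp

section pend
variable {n : ℕ} (G : SimpleGraph (Fin n)) (v : Fin n)

lemma pend_cc (i j : Fin n) : (addPendant G v).Adj i.castSucc j.castSucc ↔ G.Adj i j := by
  have := i.isLt
  have := j.isLt
  simp only [addPendant, Fin.val_castSucc, Fin.is_lt, exists_true_left]
  constructor
  · rintro (h | h | h)
    · omega
    · omega
    · exact h
  · exact fun h => Or.inr (Or.inr h)

lemma pend_cl (i : Fin n) : (addPendant G v).Adj i.castSucc (Fin.last n) ↔ i = v := by
  have := i.isLt
  simp only [addPendant, Fin.val_castSucc, Fin.val_last, Fin.ext_iff]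
  constructor
  · rintro (h | h | ⟨_, h, _⟩) <;> omega
  · intro h; right; left; simp [h]

lemma pend_lc (i : Fin n) : (addPendant G v).Adj (Fin.last n) i.castSucc ↔ i = v := by
  rw [SimpleGraph.adj_comm, pend_cl]

lemma pend_lap_c (x : Fin n → ℝ) (c : ℝ) (i : Fin n) :
    (lap (addPendant G v) *ᵥ (Fin.snoc x c : Fin (n+1) → ℝ)) i.castSucc
      = (lap G *ᵥ x) i + if i = v then x i - c else 0 := by
  rw [lap_mulVec, lap_mulVec, Fin.sum_univ_castSucc]
  simp only [pend_cc, pend_cl, Fin.snoc_castSucc, Fin.snoc_last]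

lemma pend_lap_l (x : Fin n → ℝ) (c : ℝ) :
    (lap (addPendant G v) *ᵥ (Fin.snoc x c : Fin (n+1) → ℝ)) (Fin.last n) = c - x v := by
  rw [lap_mulVec, Fin.sum_univ_castSucc]
  simp [pend_lc, Fin.snoc_castSucc, Fin.snoc_last]

lemma pend_eig {x : Fin n → ℝ} {a : ℝ} (hx : lap G *ᵥ x = a • x) (hxv : x v = 0) :
    lap (addPendant G v) *ᵥ (Fin.snoc x 0 : Fin (n+1) → ℝ)
      = a • (Fin.snoc x 0 : Fin (n+1) → ℝ) := by
  ext i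
  refine Fin.lastCases ?_ (fun i => ?_) i
  · rw [pend_lap_l]; simp [hxv]
  · rw [pend_lap_c, hx]
    simp only [Pi.smul_apply, Fin.snoc_castSucc, smul_eq_mul]
    split_ifs with h
    · subst h; simp [hxv]
    · simp

lemma snoc_ne {x : Fin n → ℝ} (hx : x ≠ 0) (c : ℝ) : (Fin.snoc x c : Fin (n+1) → ℝ) ≠ 0 := by
  intro h
  apply hx
  ext i
  have := congrFun h i.castSucc
  simpa using this

variable (hv : ∀ j, j ≠ v → G.Adj v j)
include hv

lemma lap_ev (i : Fin n) (c : ℝ) :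
    (lap G *ᵥ (fun i => 1 - c * if i = v then 1 else 0)) i
      = c * (1 - (n : ℝ) * if i = v then 1 else 0) := by
  by_cases hi : i = v
  · subst hi
    rw [lap_dom G hv]
    simp [Finset.sum_sub_distrib]; ring
  · rw [lap_mulVec, Finset.sum_eq_single v]
    · simp [hi, (hv i hi).symm]
    · intro j _ hj
      simp [hi, hj]
    · simp

lemma pend_one :
    lap (addPendant G v) *ᵥ
      (Fin.snoc (fun i => 1 - 1 * if i = v then 1 else 0) (1 - (n : ℝ)) : Fin (n+1) → ℝ)
      = (1 : ℝ) •
      (Fin.snoc (fun i => 1 - 1 * if i = v then 1 else 0) (1 - (n : ℝ)) : Fin (n+1) → ℝ) := by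
  ext i
  refine Fin.lastCases ?_ (fun i => ?_) i
  · rw [pend_lap_l]; simp
  · rw [pend_lap_c, lap_ev G v hv]
    simp only [Pi.smul_apply, Fin.snoc_castSucc, smul_eq_mul]
    split_ifs with h
    · ring
    · simp

lemma pend_np :
    lap (addPendant G v) *ᵥ
      (Fin.snoc (fun i => 1 - ((n : ℝ) + 1) * if i = v then 1 else 0) 1 : Fin (n+1) → ℝ)
      = ((n : ℝ) + 1) •
      (Fin.snoc (fun i => 1 - ((n : ℝ) + 1) * if i = v then 1 else 0) 1 : Fin (n+1) → ℝ) := by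
  ext i
  refine Fin.lastCases ?_ (fun i => ?_) i
  · rw [pend_lap_l]; simp; ring
  · rw [pend_lap_c, lap_ev G v hv]
    simp only [Pi.smul_apply, Fin.snoc_castSucc, smul_eq_mul]
    split_ifs with h
    · ring
    · simp

lemma pend_conn : (addPendant G v).Connected := by
  have key : ∀ i, (addPendant G v).Reachable v.castSucc i := by
    intro i
    refine Fin.lastCases ?_ (fun i => ?_) i
    · exact SimpleGraph.Adj.reachable ((pend_cl G v v).2 rfl)
    · by_cases h : i = v
      · rw [h]
      · exact SimpleGraph.Adj.reachable ((pend_cc G v v i).2 (hv i h))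
  exact { preconnected := fun i j => (key i).symm.trans (key j), nonempty := ⟨v.castSucc⟩ }

lemma pend_simple (hn : 2 ≤ n) (hs : HasSimpleSpectrum (lap G)) (h1 : ¬ IsEigenvalue (lap G) 1) :
    HasSimpleSpectrum (lap (addPendant G v)) := by
  obtain ⟨μ, hμ, he⟩ := hs
  set S := Finset.univ.image μ with hS
  have hScard : S.card = n := by
    rw [hS, Finset.card_image_of_injective _ hμ]; simp
  have hSe : ∀ a ∈ S, IsEigenvalue (lap G) a := by
    intro a ha
    obtain ⟨i, -, rfl⟩ := Finset.mem_image.1 ha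
    exact he i
  set S' := (S.erase 0).erase (n : ℝ) with hS'
  have hS'card : n - 2 ≤ S'.card := by
    have h1 := Finset.pred_card_le_card_erase (s := S) (a := 0)
    have h2 := Finset.pred_card_le_card_erase (s := S.erase 0) (a := (n : ℝ))
    rw [hS']
    omega
  have hS'e : ∀ a ∈ S', IsEigenvalue (lap G) a ∧ a ≠ 0 ∧ a ≠ n := by
    intro a ha
    simp only [hS', Finset.mem_erase] at ha
    exact ⟨hSe a ha.2.2, ha.2.1, ha.1⟩
  have hn0 : (0 : ℝ) < n := by exact_mod_cast (by omega : 0 < n)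
  have c3 : (n : ℝ) + 1 ∉ S' := by
    intro h
    obtain ⟨x, hx0, hx⟩ := (hS'e _ h).1
    have := eig_le G hx hx0
    linarith
  have c2 : (1 : ℝ) ∉ insert ((n : ℝ) + 1) S' := by
    rw [Finset.mem_insert]
    rintro (h | h)
    · linarith
    · exact h1 (hS'e _ h).1
  have c1 : (0 : ℝ) ∉ insert (1 : ℝ) (insert ((n : ℝ) + 1) S') := by
    rw [Finset.mem_insert, Finset.mem_insert]
    rintro (h | h | h)
    · linarith
    · linarith
    · exact (hS'e _ h).2.1 rfl
  set T := insert (0 : ℝ) (insert (1 : ℝ) (insert ((n : ℝ) + 1) S')) with hT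
  have hTcard : n + 1 ≤ T.card := by
    rw [hT, Finset.card_insert_of_notMem c1, Finset.card_insert_of_notMem c2,
      Finset.card_insert_of_notMem c3]
    omega
  have hTe : ∀ a ∈ T, IsEigenvalue (lap (addPendant G v)) a := by
    intro a ha
    simp only [hT, Finset.mem_insert] at ha
    rcases ha with rfl | rfl | rfl | ha
    · refine ⟨fun _ => 1, ?_, lap_one _⟩
      intro h
      have := congrFun h 0
      simp at this
    · refine ⟨_, ?_, pend_one G v hv⟩
      intro h
      have := congrFun h (Fin.last n)
      simp at this
      have h2 : (2 : ℝ) ≤ n := by exact_mod_cast hn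
      linarith
    · refine ⟨_, ?_, pend_np G v hv⟩
      intro h
      have := congrFun h (Fin.last n)
      simp at this
    · obtain ⟨⟨x, hx0, hx⟩, ha0, han⟩ := hS'e a ha
      exact ⟨_, snoc_ne hx0 0, pend_eig G v hx (eig_dom G hv hx ha0 han)⟩
  exact ⟨T.orderEmbOfCardLe hTcard, (T.orderEmbOfCardLe hTcard).injective,
    fun i => hTe _ (Finset.orderEmbOfCardLe_mem _ _ _)⟩

lemma two_le (hG : StronglyUncontrollable G) : 2 ≤ n := by
  by_contra h
  have hn1 : n = 1 := by have := v.isLt; omega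
  subst hn1
  obtain ⟨_, ⟨μ, hμ, he⟩, hu⟩ := hG
  choose x hx0 hx using he
  obtain ⟨i, hi⟩ := exists_orth (lap_symm G) hμ hx (hu (fun _ => 1) (fun _ => Or.inr rfl))
  apply hx0 i
  ext j
  have : j = 0 := Subsingleton.elim _ _
  subst this
  simpa [dotProduct] using hi

lemma orth_or_const (hs : HasSimpleSpectrum (lap G)) {b : Fin n → ℝ}
    (hb : ∀ i, b i = 0 ∨ b i = 1) (hu : ¬ Controllable (lap G) b) :
    (∃ (a : ℝ) (x : Fin n → ℝ), x ≠ 0 ∧ lap G *ᵥ x = a • x ∧ a ≠ 0 ∧ a ≠ n ∧ x ⬝ᵥ b = 0) ∨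
      ∃ c : ℝ, ∀ i, b i = c := by
  have hs' := hs
  obtain ⟨μ, hμ, he⟩ := hs
  choose x hx0 hx using he
  obtain ⟨i, hi⟩ := exists_orth (lap_symm G) hμ hx hu
  have hb0 : ∀ i ∈ Finset.univ, 0 ≤ b i := by
    intro i _; rcases hb i with h | h <;> rw [h]; norm_num
  have hb1 : ∀ i ∈ Finset.univ, 0 ≤ 1 - b i := by
    intro i _; rcases hb i with h | h <;> rw [h] <;> norm_num
  have hz : ∑ i, b i = 0 → ∃ c : ℝ, ∀ i, b i = c := fun h =>
    ⟨0, fun j => (Finset.sum_eq_zero_iff_of_nonneg hb0).1 h j (Finset.mem_univ _)⟩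
  by_cases h0 : μ i = 0
  · right
    have hxi := hx i
    rw [h0] at hxi
    obtain ⟨c, hc⟩ := eig_unique (lap_symm G) hs' hxi (hx0 i) (lap_one G)
    have : (fun _ => (1 : ℝ)) ⬝ᵥ b = 0 := by rw [hc, smul_dotProduct, hi, smul_zero]
    apply hz
    simpa [dotProduct] using this
  by_cases h1 : μ i = n
  · right
    have hxi := hx i
    rw [h1] at hxi
    obtain ⟨c, hc⟩ := eig_unique (lap_symm G) hs' hxi (hx0 i) (lap_dom_vec G hv)
    have : (fun i => 1 - (n : ℝ) * if i = v then 1 else 0) ⬝ᵥ b = 0 := by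
      rw [hc, smul_dotProduct, hi, smul_zero]
    simp [dotProduct, sub_mul, Finset.sum_sub_distrib] at this
    rcases hb v with h | h
    · apply hz
      rw [h] at this; linarith
    · rw [h] at this
      have h2 : ∑ i, (1 - b i) = 0 := by
        rw [Finset.sum_sub_distrib]; simp; linarith
      refine ⟨1, fun j => ?_⟩
      have := (Finset.sum_eq_zero_iff_of_nonneg hb1).1 h2 j (Finset.mem_univ _)
      linarith
  · left
    exact ⟨μ i, x i, hx0 i, hx i, h0, h1, hi⟩

lemma exists_third (hG : StronglyUncontrollable G) :
    ∃ (a : ℝ) (x : Fin n → ℝ), x ≠ 0 ∧ lap G *ᵥ x = a • x ∧ a ≠ 0 ∧ a ≠ n := by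
  have hn := two_le G v hv hG
  have : Nontrivial (Fin n) := Fin.nontrivial_iff_two_le.2 hn
  obtain ⟨j, hj⟩ := exists_ne v
  have hb : ∀ i, (Pi.single v 1 : Fin n → ℝ) i = 0 ∨ (Pi.single v 1 : Fin n → ℝ) i = 1 := by
    intro i
    by_cases h : i = v
    · right; subst h; simp
    · left; simp [h]
  rcases orth_or_const G v hv hG.2.1 hb (hG.2.2 _ hb) with ⟨a, x, h1, h2, h3, h4, _⟩ | ⟨c, hc⟩
  · exact ⟨a, x, h1, h2, h3, h4⟩
  · have h1 := hc v
    have h2 := hc j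
    simp [hj] at h1 h2
    linarith

lemma main (hG : StronglyUncontrollable G) :
    StronglyUncontrollable (addPendant G v) ↔ ¬ IsEigenvalue (lap G) 1 := by
  have hn := two_le G v hv hG
  have h2 : (2 : ℝ) ≤ n := by exact_mod_cast hn
  constructor
  · rintro ⟨-, hs, -⟩ ⟨x, hx0, hx⟩
    have hxv := eig_dom G hv hx one_ne_zero (by linarith)
    obtain ⟨c, hc⟩ := eig_unique (lap_symm _) hs (pend_eig G v hx hxv) (snoc_ne hx0 0)
      (pend_one G v hv)
    have := congrFun hc (Fin.last n)
    simp at this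
    linarith
  · intro h1
    refine ⟨pend_conn G v hv, pend_simple G v hv hn hG.2.1 h1, fun b hb => ?_⟩
    have hb' : ∀ i : Fin n, b i.castSucc = 0 ∨ b i.castSucc = 1 := fun i => hb _
    obtain ⟨a, x, hx0, hx, ha0, han, hxb⟩ : ∃ (a : ℝ) (x : Fin n → ℝ), x ≠ 0 ∧
        lap G *ᵥ x = a • x ∧ a ≠ 0 ∧ a ≠ n ∧ x ⬝ᵥ (fun i => b i.castSucc) = 0 := by
      rcases orth_or_const G v hv hG.2.1 hb' (hG.2.2 _ hb') with h | ⟨c, hc⟩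
      · exact h
      · obtain ⟨a, x, hx0, hx, ha0, han⟩ := exists_third G v hv hG
        refine ⟨a, x, hx0, hx, ha0, han, ?_⟩
        simp only [dotProduct, hc]
        rw [← Finset.sum_mul, eig_sum G hx ha0, zero_mul]
    refine not_controllable (lap_symm _) (snoc_ne hx0 0)
      (pend_eig G v hx (eig_dom G hv hx ha0 han)) ?_
    simpa [dotProduct, Fin.sum_univ_castSucc] using hxb

end pend

lemma dom_of_deg {n : ℕ} (G : SimpleGraph (Fin n)) (v : Fin n)
    (h : (G.neighborSet v).ncard = n - 1) : ∀ j, j ≠ v → G.Adj v j := by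
  have hsub : G.neighborSet v ⊆ {v}ᶜ := by
    intro j hj
    have : G.Adj v j := hj
    exact this.ne'
  have hc : ({v}ᶜ : Set (Fin n)).ncard = n - 1 := by
    rw [Set.ncard_compl]; simp
  have := Set.eq_of_subset_of_ncard_le hsub (by rw [hc, h]) (Set.toFinite _)
  intro j hj
  have hj' : j ∈ ({v}ᶜ : Set (Fin n)) := hj
  rw [← this] at hj'
  exact hj'

theorem stmt10 {n : ℕ} (hn : 0 < n) (G : SimpleGraph (Fin n))
    (hG : StronglyUncontrollable G)
    (hdeg : (G.neighborSet ⟨n - 1, by omega⟩).ncard = n - 1) :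
    StronglyUncontrollable (addPendant G ⟨n - 1, by omega⟩) ↔
      ¬ IsEigenvalue (lap G) 1 := by
  exact main G _ (dom_of_deg G _ hdeg) hG
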